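/- arXiv:math/0206273 — 3 statements merged into one kernel-verified Lean document; each statement's English description precedes it below -/
import Mathlib

section
/- Let X be a finite alphabet with k = |X| ≥ 2 elements. Let f, f₁ : ℕ → ℝ be positive functions with f₁(n) ≤ f(n) for all n, such that n ↦ f(n)/f₁(n) is subexponential. Let S ⊆ X*, and suppose there exist C > 0 and a real q with 1 ≤ q < k such that |(X* ∖ S) ∩ B_n| ≤ C q^n for every n ≥ 1. Let T : X* → ℝ be non-negative and satisfy T(w) ≤ f(|w|) for every w ∈ X* and T(w) ≤ f₁(|w|) for every w ∈ S. Then there is a finite constant C₀ (depending only on C, q, k, f, f₁ and not on T, S or the measure) such that for every length-invariant discrete probability measure μ : X* → [0,1] one has ∑_{w ∈ X*} (T(w)/f₁(|w|)) μ(w) ≤ 1 + C₀. -/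
theorem aux_mu (X : Type) [Fintype X] (μ : List X → ℝ) (h0 : ∀ w, 0 ≤ μ w) (hs : HasSum μ 1)
    (hinv : ∀ w w' : List X, w.length = w'.length → μ w = μ w') (w : List X) :
    (Fintype.card X : ℝ) ^ w.length * μ w ≤ 1 := by
  classical
  let F : Finset (List X) := (Finset.univ : Finset (Fin w.length → X)).map
    ⟨List.ofFn, List.ofFn_injective⟩
  have h1 : ∑ v ∈ F, μ v ≤ 1 := sum_le_hasSum F (fun i _ => h0 i) hs
  have h2 : ∑ v ∈ F, μ v = ∑ v ∈ F, μ w := by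
    refine Finset.sum_congr rfl fun v hv => hinv _ _ ?_
    simp only [F, Finset.mem_map] at hv
    obtain ⟨a, -, rfl⟩ := hv
    simp
  rw [h2] at h1
  simpa [F] using h1

theorem aux_summable (g : ℕ → ℝ) (hg : ∀ n, 0 ≤ g n)
    (hsub : ∀ r : ℝ, 1 < r →
      Filter.Tendsto (fun n : ℕ => g n / r ^ n) Filter.atTop (nhds 0))
    (q k : ℝ) (hq : 0 < q) (hqk : q < k) : Summable (fun n => g n * (q / k) ^ n) := by
  have hk : 0 < k := hq.trans hqk
  obtain ⟨r, hr1, hr2⟩ := exists_between ((one_lt_div hq).2 hqk)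
  have hr0 : 0 < r := by linarith
  obtain ⟨M, hM⟩ := (hsub r hr1).bddAbove_range
  have hlt : r * (q / k) < 1 := by
    rw [lt_div_iff₀ hq] at hr2
    rw [← mul_div_assoc, div_lt_one hk]
    exact hr2
  refine Summable.of_nonneg_of_le (fun n => mul_nonneg (hg n) (by positivity)) (fun n => ?_)
    ((summable_geometric_of_lt_one (by positivity) hlt).mul_left M)
  have h := hM ⟨n, rfl⟩
  simp only [div_le_iff₀ (pow_pos hr0 n)] at h
  rw [mul_pow, ← mul_assoc]
  gcongr

/-- Let `X` be a finite alphabet with `k = |X| ≥ 2` elements.  Let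
`f, f₁ : ℕ → ℝ` be positive with `f₁ ≤ f` and `f / f₁` subexponential, and let
`C > 0`, `1 ≤ q < k`.  Then there is a finite constant `C₀` (depending only on
`C, q, k, f, f₁`) such that: for every `S ⊆ X*` whose complement satisfies
`|(X* \ S) ∩ B_n| ≤ C q ^ n` for `n ≥ 1`, for every non-negative `T : X* → ℝ`
with `T w ≤ f |w|` everywhere and `T w ≤ f₁ |w|` on `S`, and for every
length-invariant discrete probability measure `μ` on `X*`, the sum
`∑_{w ∈ X*} (T w / f₁ |w|) μ w` is finite and bounded by `1 + C₀`. -/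
theorem average_case_bound_uniform (X : Type) [Fintype X]
    (hk : 2 ≤ Fintype.card X)
    (f f₁ : ℕ → ℝ) (hf : ∀ n, 0 < f n) (hf₁ : ∀ n, 0 < f₁ n)
    (hle : ∀ n, f₁ n ≤ f n)
    (hsub : ∀ r : ℝ, 1 < r →
      Filter.Tendsto (fun n : ℕ => (f n / f₁ n) / r ^ n) Filter.atTop (nhds 0))
    (C q : ℝ) (hC : 0 < C) (hq1 : 1 ≤ q) (hqk : q < (Fintype.card X : ℝ)) :
    ∃ C₀ : ℝ,
      ∀ S : Set (List X),
        (∀ n : ℕ, 1 ≤ n →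
          ((Sᶜ ∩ {w : List X | w.length ≤ n}).ncard : ℝ) ≤ C * q ^ n) →
        ∀ T : List X → ℝ, (∀ w, 0 ≤ T w) → (∀ w, T w ≤ f w.length) →
          (∀ w ∈ S, T w ≤ f₁ w.length) →
          ∀ μ : List X → ℝ, (∀ w, 0 ≤ μ w) → (∀ w, μ w ≤ 1) → HasSum μ 1 →
            (∀ w w' : List X, w.length = w'.length → μ w = μ w') →
            Summable (fun w : List X => T w / f₁ w.length * μ w) ∧
            (∑' w : List X, T w / f₁ w.length * μ w) ≤ 1 + C₀ := by
  classical
  have hk0 : (0 : ℝ) < Fintype.card X := by linarith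
  have hq0 : 0 < q := by linarith
  have hg : ∀ n, 0 ≤ f n / f₁ n := fun n => (div_pos (hf n) (hf₁ n)).le
  have hsum := aux_summable _ hg hsub q (Fintype.card X) hq0 hqk
  refine ⟨(C + 1) * ∑' n, f n / f₁ n * (q / Fintype.card X) ^ n, ?_⟩
  intro S hS T hT0 hTf hTf₁ μ hμ0 _ hμ hinv
  have hfin : ∀ n, (Sᶜ ∩ {w : List X | w.length ≤ n}).Finite := fun n =>
    (List.finite_length_le X n).subset Set.inter_subset_right
  have hcount : ∀ n (F : Finset (List X)), (∀ w ∈ F, w ∉ S ∧ w.length = n) →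
      (F.card : ℝ) ≤ (C + 1) * q ^ n := by
    intro n F hF
    rcases Nat.eq_zero_or_pos n with rfl | hn
    · have : F.card ≤ 1 := by
        rw [Finset.card_le_one]
        intro a ha b hb
        rw [List.length_eq_zero_iff.1 (hF a ha).2, List.length_eq_zero_iff.1 (hF b hb).2]
      have h' : (F.card : ℝ) ≤ 1 := by exact_mod_cast this
      simp only [pow_zero, mul_one]
      linarith
    · have h1 : F.card ≤ (Sᶜ ∩ {w : List X | w.length ≤ n}).ncard := by
        rw [← Set.ncard_coe_finset]
        exact Set.ncard_le_ncard (fun w hw => ⟨(hF w hw).1, (hF w hw).2.le⟩) (hfin n)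
      have h2 : (F.card : ℝ) ≤ (Sᶜ ∩ {w : List X | w.length ≤ n}).ncard := by exact_mod_cast h1
      have h3 := hS n hn
      have h4 : 0 < q ^ n := by positivity
      linarith
  have hbad : ∀ F : Finset (List X), (∀ w ∈ F, w ∉ S) →
      ∑ w ∈ F, T w / f₁ w.length * μ w ≤
        (C + 1) * ∑' n, f n / f₁ n * (q / Fintype.card X) ^ n := by
    intro F hF
    rw [← Finset.sum_fiberwise_of_maps_to (t := F.image List.length) (g := List.length)
      (fun w hw => Finset.mem_image_of_mem _ hw), ← tsum_mul_left]
    refine le_trans (Finset.sum_le_sum fun n _ => ?_)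
      ((hsum.mul_left (C + 1)).sum_le_tsum (F.image List.length)
        (fun n _ => mul_nonneg (by linarith) (mul_nonneg (hg n) (by positivity))))
    have hb : ∀ w ∈ F.filter (fun w => w.length = n), T w / f₁ w.length * μ w ≤
        f n / f₁ n * (1 / (Fintype.card X : ℝ) ^ n) := by
      intro w hw
      obtain ⟨_, rfl⟩ := Finset.mem_filter.1 hw
      have h1 : μ w ≤ 1 / (Fintype.card X : ℝ) ^ w.length := by
        rw [le_div_iff₀ (by positivity), mul_comm]
        exact aux_mu X μ hμ0 hμ hinv w
      have h2 : T w / f₁ w.length ≤ f w.length / f₁ w.length :=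
        div_le_div_of_nonneg_right (hTf w) (hf₁ _).le
      exact mul_le_mul h2 h1 (hμ0 w) (hg _)
    refine (Finset.sum_le_card_nsmul _ _ _ hb).trans ?_
    rw [nsmul_eq_mul]
    have hc := hcount n (F.filter (fun w => w.length = n)) (fun w hw =>
      ⟨hF w (Finset.mem_filter.1 hw).1, (Finset.mem_filter.1 hw).2⟩)
    refine (mul_le_mul_of_nonneg_right hc (mul_nonneg (hg n) (by positivity))).trans (le_of_eq ?_)
    rw [div_pow]
    ring
  have hnn : ∀ w, 0 ≤ T w / f₁ w.length * μ w := fun w =>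
    mul_nonneg (div_nonneg (hT0 w) (hf₁ _).le) (hμ0 w)
  have hall : ∀ F : Finset (List X), ∑ w ∈ F, T w / f₁ w.length * μ w ≤
      1 + (C + 1) * ∑' n, f n / f₁ n * (q / Fintype.card X) ^ n := by
    intro F
    rw [← Finset.sum_filter_add_sum_filter_not F (fun w => w ∈ S)]
    refine add_le_add ?_ (hbad _ fun w hw => (Finset.mem_filter.1 hw).2)
    refine le_trans (Finset.sum_le_sum fun w hw => ?_)
      (sum_le_hasSum (F.filter (fun w => w ∈ S)) (fun i _ => hμ0 i) hμ)
    have h1 : T w / f₁ w.length ≤ 1 :=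
      (div_le_one (hf₁ _)).2 (hTf₁ w (Finset.mem_filter.1 hw).2)
    exact mul_le_of_le_one_left (hμ0 w) h1
  exact ⟨summable_of_sum_le hnn hall, Real.tsum_le_of_sum_le hnn hall⟩
end

section
/- (Proposition 3.2, measure-theoretic form.) Let X be a finite alphabet with k = |X| ≥ 2 elements. Let f, f₁ : ℕ → ℝ be positive functions with f₁(n) ≤ f(n) for all n, such that n ↦ f(n)/f₁(n) is subexponential. Let S ⊆ X* be a set with ρ_n(S) → 1 exponentially fast, i.e., there exist C > 0 and 0 ≤ σ < 1 with 1 − |S ∩ B_n|/|B_n| ≤ C σ^n for all n ≥ 1. Let T : X* → ℝ be non-negative and satisfy T(w) ≤ f(|w|) for every w ∈ X* and T(w) ≤ f₁(|w|) for every w ∈ S. Then the supremum, taken over all length-invariant discrete probability measures μ : X* → [0,1], of the sums ∑_{w ∈ X*} (T(w)/f₁(|w|)) μ(w) is finite. -/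
theorem aux_sphere_card (X : Type) [Fintype X] (n : ℕ) :
    (({w : List X | w.length = n} : Set (List X)).ncard) = Fintype.card X ^ n := by
  have h : Nat.card (List.Vector X n) = Fintype.card X ^ n := by
    rw [Nat.card_eq_fintype_card, card_vector]
  exact h

theorem aux_ball_card (X : Type) [Fintype X] (hk : 2 ≤ Fintype.card X) (n : ℕ) :
    (({w : List X | w.length ≤ n} : Set (List X)).ncard) ≤ 2 * Fintype.card X ^ n := by
  induction n with
  | zero =>
    have h : ({w : List X | w.length ≤ 0} : Set (List X)) = {w : List X | w.length = 0} := by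
      ext w; simp
    rw [h, aux_sphere_card]; omega
  | succ n ih =>
    have h : ({w : List X | w.length ≤ n + 1} : Set (List X)) =
        {w : List X | w.length ≤ n} ∪ {w : List X | w.length = n + 1} := by
      ext w; simp only [Set.mem_ofPred_eq, Set.mem_union]; omega
    rw [h]
    refine (Set.ncard_union_le _ _).trans ?_
    rw [aux_sphere_card, pow_succ]
    nlinarith [Nat.zero_le (Fintype.card X ^ n)]

/-- Proposition 3.2 (measure-theoretic form).  Let `X` be a finite alphabet with
`k = |X| ≥ 2` elements, let `f, f₁ : ℕ → ℝ` be positive with `f₁ ≤ f` and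
`f / f₁` subexponential, and let `S ⊆ X*` be a set with `ρ_n(S) → 1`
exponentially fast, i.e. `1 - |S ∩ B_n| / |B_n| ≤ C σ ^ n` for some `C > 0`,
`0 ≤ σ < 1` and all `n ≥ 1`.  Let `T : X* → ℝ` be non-negative with
`T w ≤ f |w|` everywhere and `T w ≤ f₁ |w|` on `S`.  Then the supremum over all
length-invariant discrete probability measures `μ` of `∑_{w} (T w / f₁ |w|) μ w`
is finite: there is a single bound `C'` valid for every such `μ` (each sum being
finite). -/
theorem average_case_sup_finite (X : Type) [Fintype X]
    (hk : 2 ≤ Fintype.card X)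
    (f f₁ : ℕ → ℝ) (hf : ∀ n, 0 < f n) (hf₁ : ∀ n, 0 < f₁ n)
    (hle : ∀ n, f₁ n ≤ f n)
    (hsub : ∀ r : ℝ, 1 < r →
      Filter.Tendsto (fun n : ℕ => (f n / f₁ n) / r ^ n) Filter.atTop (nhds 0))
    (S : Set (List X)) (C σ : ℝ) (hC : 0 < C) (hσ0 : 0 ≤ σ) (hσ1 : σ < 1)
    (hS : ∀ n : ℕ, 1 ≤ n →
      1 - ((S ∩ {w : List X | w.length ≤ n}).ncard : ℝ) /
            (({w : List X | w.length ≤ n} : Set (List X)).ncard : ℝ) ≤ C * σ ^ n)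
    (T : List X → ℝ) (hT0 : ∀ w, 0 ≤ T w) (hTf : ∀ w, T w ≤ f w.length)
    (hTS : ∀ w ∈ S, T w ≤ f₁ w.length) :
    ∃ C' : ℝ,
      ∀ μ : List X → ℝ, (∀ w, 0 ≤ μ w) → (∀ w, μ w ≤ 1) → HasSum μ 1 →
        (∀ w w' : List X, w.length = w'.length → μ w = μ w') →
        Summable (fun w : List X => T w / f₁ w.length * μ w) ∧
        (∑' w : List X, T w / f₁ w.length * μ w) ≤ C' := by
  classical
  -- bound on the ratio
  obtain ⟨K, hK0, hK⟩ : ∃ K : ℝ, 0 ≤ K ∧ ∀ n, f n / f₁ n * σ ^ n ≤ K := by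
    set τ := max σ (1 / 2) with hτ
    have hτ0 : 0 < τ := lt_of_lt_of_le (by norm_num) (le_max_right _ _)
    have hτ1 : τ < 1 := max_lt hσ1 (by norm_num)
    obtain ⟨K, hK⟩ := (hsub τ⁻¹ ((one_lt_inv₀ hτ0).2 hτ1)).bddAbove_range
    have hK' : ∀ n, f n / f₁ n * τ ^ n ≤ K := by
      intro n
      have := hK (Set.mem_range_self n)
      simpa [inv_pow, div_inv_eq_mul] using this
    have hg : ∀ n, 0 ≤ f n / f₁ n := fun n => (div_pos (hf n) (hf₁ n)).le
    refine ⟨K, le_trans (mul_nonneg (hg 0) (pow_nonneg hτ0.le 0)) (hK' 0), fun n => ?_⟩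
    refine le_trans (mul_le_mul_of_nonneg_left ?_ (hg n)) (hK' n)
    exact pow_le_pow_left₀ hσ0 (le_max_left _ _) n
  set k : ℝ := (Fintype.card X : ℝ) with hkdef
  have hk0 : 0 < k := by rw [hkdef]; exact_mod_cast (by omega : 0 < Fintype.card X)
  let L : ℕ → Finset (List X) := fun n => (List.finite_length_eq X n).toFinset
  have hL : ∀ n w, w ∈ L n ↔ w.length = n := by intro n w; simp [L]
  have hLc : ∀ n, ((L n).card : ℝ) = k ^ n := by
    intro n
    rw [hkdef, ← Nat.cast_pow, ← aux_sphere_card X n,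
      Set.ncard_eq_toFinset_card _ (List.finite_length_eq X n)]
  set C₁ := max C 1 with hC₁
  have hC₁0 : 0 < C₁ := lt_of_lt_of_le hC (le_max_left _ _)
  -- bad words
  have hbad : ∀ n, (((L n).filter (fun w => w ∉ S)).card : ℝ) ≤ 2 * C₁ * σ ^ n * k ^ n := by
    intro n
    rcases Nat.eq_zero_or_pos n with rfl | hn
    · have h1 : (((L 0).filter (fun w => w ∉ S)).card : ℝ) ≤ (L 0).card := by
        exact_mod_cast Finset.card_filter_le _ _
      rw [hLc] at h1
      have : 1 ≤ C₁ := le_max_right _ _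
      simp only [pow_zero, mul_one] at h1 ⊢
      linarith
    · set B : Set (List X) := {w : List X | w.length ≤ n} with hB
      have hBf : B.Finite := List.finite_length_le X n
      have h1 : (((L n).filter (fun w => w ∉ S)).card : ℝ) ≤ ((B \ S).ncard : ℝ) := by
        have hs : (((L n).filter (fun w => w ∉ S) : Finset (List X)) : Set (List X)) ⊆ B \ S := by
          intro w hw
          have hw' := Finset.mem_filter.1 (Finset.mem_coe.1 hw)
          exact ⟨((hL n w).1 hw'.1).le, hw'.2⟩
        have h := Set.ncard_le_ncard hs (hBf.subset Set.sdiff_subset)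
        rw [Set.ncard_coe_finset] at h
        exact Nat.cast_le.2 h
      have h2 : ((S ∩ B).ncard : ℝ) + ((B \ S).ncard : ℝ) = (B.ncard : ℝ) := by
        rw [Set.inter_comm]
        exact_mod_cast Set.ncard_inter_add_ncard_sdiff_eq_ncard B S hBf
      have hBpos : (0 : ℝ) < (B.ncard : ℝ) := by
        have : 0 < B.ncard := (Set.ncard_pos hBf).2 ⟨[], by simp [hB]⟩
        exact_mod_cast this
      have hBle : (B.ncard : ℝ) ≤ 2 * k ^ n := by
        rw [hkdef]; exact_mod_cast aux_ball_card X hk n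
      have h3 := hS n hn
      have h4 : ((B \ S).ncard : ℝ) ≤ C * σ ^ n * (B.ncard : ℝ) := by
        have h5 := mul_le_mul_of_nonneg_right h3 hBpos.le
        rw [sub_mul, div_mul_cancel₀ _ hBpos.ne'] at h5
        linarith
      have hσn : 0 ≤ σ ^ n := pow_nonneg hσ0 n
      calc (((L n).filter (fun w => w ∉ S)).card : ℝ) ≤ C * σ ^ n * (B.ncard : ℝ) := h1.trans h4
        _ ≤ C₁ * σ ^ n * (2 * k ^ n) := by
          gcongr
          exact le_max_left _ _
        _ = 2 * C₁ * σ ^ n * k ^ n := by ring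
  set D := 1 + 2 * C₁ * K with hD
  have hD0 : 0 ≤ D := by positivity
  have hsph : ∀ n, ∑ w ∈ L n, T w / f₁ w.length ≤ D * k ^ n := by
    intro n
    rw [← Finset.sum_filter_add_sum_filter_not (L n) (fun w => w ∈ S)]
    have h1 : ∑ w ∈ (L n).filter (fun w => w ∈ S), T w / f₁ w.length ≤ k ^ n := by
      calc _ ≤ ∑ w ∈ (L n).filter (fun w => w ∈ S), (1 : ℝ) := by
            apply Finset.sum_le_sum
            intro w hw
            exact (div_le_one (hf₁ _)).2 (hTS w (Finset.mem_filter.1 hw).2)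
        _ = (((L n).filter (fun w => w ∈ S)).card : ℝ) := by simp
        _ ≤ ((L n).card : ℝ) := by exact_mod_cast Finset.card_filter_le _ _
        _ = k ^ n := hLc n
    have h2 : ∑ w ∈ (L n).filter (fun w => w ∉ S), T w / f₁ w.length ≤
        2 * C₁ * K * k ^ n := by
      have hg : 0 ≤ f n / f₁ n := (div_pos (hf n) (hf₁ n)).le
      calc _ ≤ ∑ w ∈ (L n).filter (fun w => w ∉ S), f n / f₁ n := by
            apply Finset.sum_le_sum
            intro w hw
            have hw' := (hL n w).1 (Finset.mem_filter.1 hw).1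
            have := hTf w
            rw [hw'] at this ⊢
            exact div_le_div_of_nonneg_right this (hf₁ n).le
        _ = (((L n).filter (fun w => w ∉ S)).card : ℝ) * (f n / f₁ n) := by
            rw [Finset.sum_const, nsmul_eq_mul]
        _ ≤ (2 * C₁ * σ ^ n * k ^ n) * (f n / f₁ n) := mul_le_mul_of_nonneg_right (hbad n) hg
        _ = (2 * C₁ * k ^ n) * (f n / f₁ n * σ ^ n) := by ring
        _ ≤ (2 * C₁ * k ^ n) * K := mul_le_mul_of_nonneg_left (hK n) (by positivity)
        _ = _ := by ring
    rw [hD]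
    linarith
  refine ⟨D, fun μ hμ0 _ hμ hinv => ?_⟩
  have hnn : ∀ w, 0 ≤ T w / f₁ w.length * μ w := fun w =>
    mul_nonneg (div_nonneg (hT0 w) (hf₁ _).le) (hμ0 w)
  have hsphμ : ∀ n, ∑ w ∈ L n, T w / f₁ w.length * μ w ≤ D * ∑ w ∈ L n, μ w := by
    intro n
    obtain ⟨x⟩ : Nonempty X := Fintype.card_pos_iff.1 (by omega)
    have hc : ∀ w ∈ L n, μ w = μ (List.replicate n x) := fun w hw =>
      hinv _ _ (by rw [(hL n w).1 hw, List.length_replicate])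
    rw [Finset.sum_congr rfl hc, Finset.sum_const, nsmul_eq_mul, hLc,
      Finset.sum_congr rfl (fun w hw => by rw [hc w hw]), ← Finset.sum_mul, ← mul_assoc]
    exact mul_le_mul_of_nonneg_right (hsph n) (hμ0 _)
  have key : ∀ F : Finset (List X), ∑ w ∈ F, T w / f₁ w.length * μ w ≤ D := by
    intro F
    set R := F.image List.length with hR
    have hdisj : (R : Set ℕ).PairwiseDisjoint L := by
      intro a _ b _ hab
      refine Finset.disjoint_left.2 fun w h1 h2 => hab ?_
      rw [← (hL a w).1 h1, (hL b w).1 h2]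
    calc ∑ w ∈ F, T w / f₁ w.length * μ w
        ≤ ∑ w ∈ R.biUnion L, T w / f₁ w.length * μ w := by
          apply Finset.sum_le_sum_of_subset_of_nonneg
          · intro w hw
            exact Finset.mem_biUnion.2 ⟨w.length, Finset.mem_image_of_mem _ hw, (hL _ _).2 rfl⟩
          · intro w _ _
            exact hnn w
      _ = ∑ n ∈ R, ∑ w ∈ L n, T w / f₁ w.length * μ w := Finset.sum_biUnion hdisj
      _ ≤ ∑ n ∈ R, D * ∑ w ∈ L n, μ w := Finset.sum_le_sum fun n _ => hsphμ n
      _ = D * ∑ w ∈ R.biUnion L, μ w := by rw [Finset.sum_biUnion hdisj, Finset.mul_sum]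
      _ ≤ D * 1 := mul_le_mul_of_nonneg_left (sum_le_hasSum _ (fun w _ => hμ0 w) hμ) hD0
      _ = D := mul_one D
  exact ⟨summable_of_sum_le hnn key, Real.tsum_le_of_sum_le hnn key⟩
end

section
/- (Remark 3.3.) Let X be a finite alphabet with k = |X| ≥ 2 elements, let m ≥ 1 be an integer, and let C, C' > 0. Let f : ℕ → ℝ be a non-negative subexponential function and let T : X* → ℝ be non-negative with T(w) ≤ f(|w|) for every w ∈ X*. Let S ⊆ X* be such that T(w) ≤ C |w|^m for every w ∈ S, and suppose the complement K = X* ∖ S satisfies |K ∩ B_n| ≤ C' q^n for every n ≥ 1, for some real q with 1 ≤ q < k. Then for every ε > 0 the sum ∑_{w ∈ X*, |w| ≥ 1} (T(w)/|w|^{m−1+ε}) · (1/(|w|² k^{|w|})) is finite. -/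
theorem summable_words_aux {X : Type} [Fintype X] (A : Set (List X)) (g : List X → ℝ)
    (hg0 : ∀ w, 0 ≤ g w) (N b : ℕ → ℝ) (hb : ∀ n, 0 ≤ b n) (hN0 : ∀ n, 0 ≤ N n)
    (hN : ∀ n, 1 ≤ n → ((A ∩ {w : List X | w.length = n}).ncard : ℝ) ≤ N n)
    (hgb : ∀ w ∈ A, g w ≤ b w.length)
    (hs : Summable fun n => N n * b n) :
    Summable (fun w : {w : List X // 1 ≤ w.length} => A.indicator g (w : List X)) := by
  classical
  refine summable_of_sum_le (c := ∑' n, N n * b n)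
    (fun w => Set.indicator_nonneg (fun x _ => hg0 x) _) ?_
  intro u
  rw [← Finset.sum_fiberwise_of_maps_to (s := u) (t := u.image fun w => w.1.length)
    (g := fun w => w.1.length) (fun w hw => Finset.mem_image_of_mem _ hw)]
  refine le_trans (Finset.sum_le_sum (g := fun n => N n * b n) ?_)
    (hs.sum_le_tsum _ (fun n _ => mul_nonneg (hN0 n) (hb n)))
  intro n hn
  have hn1 : 1 ≤ n := by
    obtain ⟨w, _, rfl⟩ := Finset.mem_image.1 hn
    exact w.2
  have h1 : ∑ w ∈ u with w.1.length = n, A.indicator g w.1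
      = ∑ w ∈ (u.filter (fun w => w.1.length = n)).filter (fun w => w.1 ∈ A), g w.1 := by
    rw [Finset.sum_filter (fun w : {w : List X // 1 ≤ w.length} => w.1 ∈ A)]
    exact Finset.sum_congr rfl fun w _ => by rw [Set.indicator_apply]
  rw [h1]
  refine le_trans (Finset.sum_le_card_nsmul _ _ (b n) ?_) ?_
  · intro w hw
    simp only [Finset.mem_filter] at hw
    rw [← hw.1.2]
    exact hgb _ hw.2
  · rw [nsmul_eq_mul]
    refine mul_le_mul_of_nonneg_right (le_trans ?_ (hN n hn1)) (hb n)
    rw [← Finset.card_image_of_injective _ Subtype.val_injective, ← Set.ncard_coe_finset]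
    have hfin : (A ∩ {w : List X | w.length = n}).Finite :=
      (List.finite_length_eq X n).subset Set.inter_subset_right
    refine Nat.cast_le.2 (Set.ncard_le_ncard ?_ hfin)
    intro w hw
    simp only [Finset.coe_image, Set.mem_image, Finset.mem_coe, Finset.mem_filter] at hw
    obtain ⟨v, hv, rfl⟩ := hw
    exact ⟨hv.2, hv.1.2⟩

/-- Remark 3.3.  Let `X` be a finite alphabet with `k = |X| ≥ 2` elements,
`m ≥ 1` an integer, and `C, C' > 0`.  Let `f : ℕ → ℝ` be a non-negative
subexponential function and `T : X* → ℝ` non-negative with `T w ≤ f |w|` for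
every word `w`.  Let `S ⊆ X*` satisfy `T w ≤ C |w| ^ m` for `w ∈ S`, and
suppose the complement `K = X* \ S` satisfies `|K ∩ B_n| ≤ C' q ^ n` for every
`n ≥ 1`, where `1 ≤ q < k`.  Then for every `ε > 0` the sum
`∑_{w ∈ X*, |w| ≥ 1} (T w / |w| ^ (m - 1 + ε)) * (1 / (|w|² k^{|w|}))`
is finite. -/
theorem cauchy_average_case_polynomial (X : Type) [Fintype X]
    (hk : 2 ≤ Fintype.card X) (m : ℕ) (hm : 1 ≤ m) (C C' : ℝ)
    (hC : 0 < C) (hC' : 0 < C')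
    (f : ℕ → ℝ) (hf : ∀ n, 0 ≤ f n)
    (hsub : ∀ r : ℝ, 1 < r →
      Filter.Tendsto (fun n : ℕ => f n / r ^ n) Filter.atTop (nhds 0))
    (T : List X → ℝ) (hT0 : ∀ w, 0 ≤ T w) (hTf : ∀ w, T w ≤ f w.length)
    (S : Set (List X)) (hTS : ∀ w ∈ S, T w ≤ C * (w.length : ℝ) ^ m)
    (q : ℝ) (hq1 : 1 ≤ q) (hqk : q < (Fintype.card X : ℝ))
    (hK : ∀ n : ℕ, 1 ≤ n →
      ((Sᶜ ∩ {w : List X | w.length ≤ n}).ncard : ℝ) ≤ C' * q ^ n) :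
    ∀ ε : ℝ, 0 < ε →
      Summable (fun w : {w : List X // 1 ≤ w.length} =>
        T ↑w / ((w : List X).length : ℝ) ^ ((m : ℝ) - 1 + ε) *
          (1 / (((w : List X).length : ℝ) ^ 2 *
            (Fintype.card X : ℝ) ^ (w : List X).length))) := by
  intro ε hε
  set k : ℝ := (Fintype.card X : ℝ) with hkdef
  have hk2 : (2 : ℝ) ≤ k := by rw [hkdef]; exact_mod_cast hk
  have hk0 : 0 < k := by linarith
  have hq0 : 0 < q := by linarith
  have hm1 : (1 : ℝ) ≤ m := by exact_mod_cast hm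
  set e : ℝ := (m : ℝ) - 1 + ε with he
  have he0 : 0 < e := by linarith
  let D : ℕ → ℝ := fun n => 1 / ((n : ℝ) ^ 2 * k ^ n)
  have hD : ∀ n, 0 ≤ D n := fun n => by positivity
  let g : List X → ℝ := fun w => T w / (w.length : ℝ) ^ e * D w.length
  have hg0 : ∀ w, 0 ≤ g w := fun w =>
    mul_nonneg (div_nonneg (hT0 w) (by positivity)) (hD _)
  have hS : Summable (fun w : {w : List X // 1 ≤ w.length} => S.indicator g (w : List X)) := by
    refine summable_words_aux S g hg0 (fun n => k ^ n)
      (fun n => C * (n : ℝ) ^ m / (n : ℝ) ^ e * D n)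
      (fun n => mul_nonneg (by positivity) (hD n)) (fun n => by positivity) ?_ ?_ ?_
    · intro n _
      have h1 : (S ∩ {w : List X | w.length = n}).ncard ≤ {w : List X | w.length = n}.ncard :=
        Set.ncard_le_ncard Set.inter_subset_right (List.finite_length_eq X n)
      have h2 : {w : List X | w.length = n}.ncard = Fintype.card X ^ n := by
        rw [← Nat.card_coe_set_eq, ← card_vector (α := X) n, ← Nat.card_eq_fintype_card]
        rfl
      rw [h2] at h1
      rw [hkdef]
      exact_mod_cast h1
    · intro w hw
      have := hTS w hw
      have := hD w.length
      simp only [g]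
      gcongr
    · have hsum : Summable (fun n : ℕ => C * (1 / (n : ℝ) ^ (1 + ε))) :=
        (Real.summable_one_div_nat_rpow.2 (by linarith)).mul_left C
      refine hsum.congr fun n => ?_
      rcases Nat.eq_zero_or_pos n with rfl | hn
      · have : (1 + ε) ≠ 0 := by linarith
        simp [D, Real.zero_rpow this]
      · have hn' : (0 : ℝ) < n := by exact_mod_cast hn
        have h3 : (n : ℝ) ^ e * (n : ℝ) ^ 2 = (n : ℝ) ^ m * (n : ℝ) ^ (1 + ε) := by
          rw [← Real.rpow_natCast, ← Real.rpow_natCast, ← Real.rpow_add hn',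
            ← Real.rpow_add hn']
          congr 1
          rw [he]; push_cast; ring
        have h4 : 0 < (n : ℝ) ^ e := by positivity
        have h5 : 0 < (n : ℝ) ^ (1 + ε) := by positivity
        simp only [D]
        generalize (n : ℝ) ^ e = a at *
        generalize (n : ℝ) ^ (1 + ε) = c at *
        field_simp
        linear_combination h3
  have hKs : Summable
      (fun w : {w : List X // 1 ≤ w.length} => Sᶜ.indicator g (w : List X)) := by
    refine summable_words_aux Sᶜ g hg0 (fun n => C' * q ^ n)
      (fun n => f n / (n : ℝ) ^ e * D n)
      (fun n => mul_nonneg (div_nonneg (hf n) (by positivity)) (hD n))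
      (fun n => by positivity) ?_ ?_ ?_
    · intro n hn
      refine le_trans (Nat.cast_le.2 (Set.ncard_le_ncard ?_ ?_)) (hK n hn)
      · exact Set.inter_subset_inter_right _ fun w hw => le_of_eq hw
      · exact (List.finite_length_le X n).subset Set.inter_subset_right
    · intro w _
      have := hTf w
      have := hD w.length
      simp only [g]
      gcongr
    · obtain ⟨r, hr1, hr2⟩ := exists_between ((one_lt_div hq0).2 hqk)
      have hr0 : 0 < r := by linarith
      obtain ⟨M, hM⟩ := (hsub r hr1).bddAbove_range
      have hM' : ∀ n, f n ≤ M * r ^ n := fun n =>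
        (div_le_iff₀ (by positivity)).1 (hM ⟨n, rfl⟩)
      have hM0 : 0 ≤ M := le_trans (by simpa using hf 0) (by simpa using hM' 0)
      have hlt : r * q / k < 1 := by
        rw [div_lt_one hk0]
        exact (lt_div_iff₀ hq0).1 hr2
      have hsum : Summable (fun n : ℕ => C' * M * (r * q / k) ^ n) :=
        (summable_geometric_of_lt_one (by positivity) hlt).mul_left _
      refine Summable.of_nonneg_of_le (fun n => mul_nonneg (by positivity)
        (mul_nonneg (div_nonneg (hf n) (by positivity)) (hD n))) (fun n => ?_) hsum
      rcases Nat.eq_zero_or_pos n with rfl | hn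
      · simp [D]; positivity
      · have hn' : (1 : ℝ) ≤ n := by exact_mod_cast hn
        have h6 : f n / (n : ℝ) ^ e ≤ M * r ^ n :=
          (div_le_self (hf n) (Real.one_le_rpow hn' he0.le)).trans (hM' n)
        have h7 : D n ≤ 1 / k ^ n := by
          simp only [D]
          apply one_div_le_one_div_of_le (by positivity)
          exact le_mul_of_one_le_left (by positivity) (one_le_pow₀ hn')
        calc C' * q ^ n * (f n / (n : ℝ) ^ e * D n)
            ≤ C' * q ^ n * ((M * r ^ n) * (1 / k ^ n)) := by
              have := hD n
              gcongr
          _ = C' * M * (r * q / k) ^ n := by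
              rw [div_pow, mul_pow]; ring
  refine (hS.add hKs).congr fun w => ?_
  have := congrFun (Set.indicator_self_add_compl S g) w.1
  simp only [Pi.add_apply] at this
  first
    | exact this
    | exact this.symm
end
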